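/- For boundary data (r1, v1, r2, v2) with r1 ≠ 0 and r2 ≠ 0, define the achievable transfer-duration set D(r1, v1, r2, v2) = { tf − t0 : tf > t0 and there exists a controlled two-body trajectory (r, v, m, u, α) on [t0, tf] with r(t0) = r1, v(t0) = v1, r(tf) = r2, v(tf) = v2 }. Then for every surjective linear isometry R : ℝ³ → ℝ³, D(R r1, R v1, R r2, R v2) = D(r1, v1, r2, v2). In particular the minimum (infimal) transfer time of the rendezvous problem is invariant under simultaneous rotation of the boundary states. -/

import Mathlib

/-!
The two-body dynamics is equivariant under linear isometries: the gravity coefficient depends on `r`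
only through `‖r‖`, the thrust direction is only constrained by `‖α‖ = 1`, and `R` commutes with
differentiation. So `(R ∘ r, R ∘ v, R ∘ α, m, u)` is a controlled trajectory whenever
`(r, v, α, m, u)` is (`IsControlledTraj.map`), which gives one inclusion of duration sets for `R`
(`AchievableDuration.subset_map`); the other is the same inclusion for the inverse isometry.
-/

/-- A controlled two-body trajectory on `[t0, tf]`. -/
def IsControlledTraj (μ Tmax Isp g0 m0 t0 tf : ℝ)
    (r v α : ℝ → EuclideanSpace ℝ (Fin 3)) (m u : ℝ → ℝ) : Prop :=
  (∀ t ∈ Set.Icc t0 tf, r t ≠ 0) ∧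
  (∀ t ∈ Set.Icc t0 tf, 0 < m t) ∧
  m t0 = m0 ∧
  (∀ t ∈ Set.Icc t0 tf, u t ∈ Set.Icc (0 : ℝ) 1) ∧
  (∀ t ∈ Set.Icc t0 tf, ‖α t‖ = 1) ∧
  (∀ t ∈ Set.Icc t0 tf, HasDerivAt r (v t) t) ∧
  (∀ t ∈ Set.Icc t0 tf,
    HasDerivAt v ((-(μ / ‖r t‖ ^ 3)) • r t + (Tmax / m t * u t) • α t) t) ∧
  (∀ t ∈ Set.Icc t0 tf, HasDerivAt m (-(Tmax * u t) / (Isp * g0)) t)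

/-- The set of achievable transfer durations `tf − t0` of the rendezvous
problem with boundary data `(r1, v1, r2, v2)`. -/
def AchievableDuration (μ Tmax Isp g0 m0 t0 : ℝ)
    (r1 v1 r2 v2 : EuclideanSpace ℝ (Fin 3)) : Set ℝ :=
  { d | ∃ tf, t0 < tf ∧ d = tf - t0 ∧
      ∃ r v α m u, IsControlledTraj μ Tmax Isp g0 m0 t0 tf r v α m u ∧
        r t0 = r1 ∧ v t0 = v1 ∧ r tf = r2 ∧ v tf = v2 }

theorem IsControlledTraj.map {μ Tmax Isp g0 m0 t0 tf : ℝ}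
    {r v α : ℝ → EuclideanSpace ℝ (Fin 3)} {m u : ℝ → ℝ}
    (R : EuclideanSpace ℝ (Fin 3) →ₗᵢ[ℝ] EuclideanSpace ℝ (Fin 3))
    (h : IsControlledTraj μ Tmax Isp g0 m0 t0 tf r v α m u) :
    IsControlledTraj μ Tmax Isp g0 m0 t0 tf
      (fun t => R (r t)) (fun t => R (v t)) (fun t => R (α t)) m u := by
  obtain ⟨hr, hm, hm0, hu, hα, hdr, hdv, hdm⟩ := h
  have hderiv : ∀ {f : ℝ → EuclideanSpace ℝ (Fin 3)} {f' : EuclideanSpace ℝ (Fin 3)} {t : ℝ},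
      HasDerivAt f f' t → HasDerivAt (fun s => R (f s)) (R f') t := fun hf =>
    R.toContinuousLinearMap.hasFDerivAt.comp_hasDerivAt _ hf
  refine ⟨fun t ht h0 => hr t ht ?_, hm, hm0, hu, fun t ht => ?_,
    fun t ht => hderiv (hdr t ht), fun t ht => ?_, hdm⟩
  · exact R.injective (h0.trans R.map_zero.symm)
  · rw [R.norm_map, hα t ht]
  · simpa only [map_add, map_smul, R.norm_map] using hderiv (hdv t ht)

theorem AchievableDuration.subset_map (μ Tmax Isp g0 m0 t0 : ℝ)
    (r1 v1 r2 v2 : EuclideanSpace ℝ (Fin 3))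
    (R : EuclideanSpace ℝ (Fin 3) →ₗᵢ[ℝ] EuclideanSpace ℝ (Fin 3)) :
    AchievableDuration μ Tmax Isp g0 m0 t0 r1 v1 r2 v2
      ⊆ AchievableDuration μ Tmax Isp g0 m0 t0 (R r1) (R v1) (R r2) (R v2) := by
  rintro d ⟨tf, htf, rfl, r, v, α, m, u, h, rfl, rfl, rfl, rfl⟩
  exact ⟨tf, htf, rfl, _, _, _, m, u, h.map R, rfl, rfl, rfl, rfl⟩

/-- Rotational invariance of the achievable transfer-duration set (hence of
the minimum transfer time) under simultaneous rotation of the boundary states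
by a surjective linear isometry. -/
theorem achievable_duration_rotation_invariant
    (μ Tmax Isp g0 m0 t0 : ℝ)
    (hμ : 0 < μ) (hT : 0 < Tmax) (hI : 0 < Isp) (hg : 0 < g0) (hm0 : 0 < m0)
    (r1 v1 r2 v2 : EuclideanSpace ℝ (Fin 3)) (hr1 : r1 ≠ 0) (hr2 : r2 ≠ 0)
    (R : EuclideanSpace ℝ (Fin 3) →ₗᵢ[ℝ] EuclideanSpace ℝ (Fin 3))
    (hR : Function.Surjective R) :
    AchievableDuration μ Tmax Isp g0 m0 t0 (R r1) (R v1) (R r2) (R v2)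
      = AchievableDuration μ Tmax Isp g0 m0 t0 r1 v1 r2 v2 := by
  refine Set.Subset.antisymm ?_ (AchievableDuration.subset_map _ _ _ _ _ _ _ _ _ _ R)
  let e := LinearIsometryEquiv.ofSurjective R hR
  have he : ∀ x, e.symm.toLinearIsometry (R x) = x := fun x => e.symm_apply_apply x
  simpa only [he] using AchievableDuration.subset_map μ Tmax Isp g0 m0 t0
    (R r1) (R v1) (R r2) (R v2) e.symm.toLinearIsometry
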